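/- Let A ⊂ ℚ be a finite set of nonzero rationals with |AA| ≤ K|A|, and let u ∈ ℚ be nonzero. Then for every integer k ≥ 2, |(A+u)^{(k)}| ≥ |A|^{k−1} / ( K^k · (2·C(2k,2))^{Kk} ), where C(2k,2) = (2k)(2k−1)/2. -/

import Mathlib

open Finset Pointwise

/-- `(A+u)^{(k)} = {(a₁+u)⋯(a_k+u) : a₁,…,a_k ∈ A}`. -/
def shiftProdSet (k : ℕ) (A : Finset ℚ) (u : ℚ) : Finset ℚ :=
  (Fintype.piFinset fun _ : Fin k => A).image fun f => ∏ i, (f i + u)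

/-!
Count the solutions of `a₁ ⋯ a_k = b₁ ⋯ b_k`, `(a₁ + u) ⋯ (a_k + u) = (b₁ + u) ⋯ (b_k + u)` in
`A`, that is, the `2k`-fold energy of `{(a, a + u)}` in `ℚˣ × ℚˣ`. Fix a prime `p` and split `A`
according to whether `|a|_p ≤ |u|_p`. On the first half divide the second equation by `u ^ k` to
get `∏ (1 + aᵢ / u) = ∏ (1 + bᵢ / u)`, on the other half divide it by the first equation to get
`∏ (1 + u / aᵢ) = ∏ (1 + u / bᵢ)`. By the ultrametric inequality no term of such an identity can
be the strictly largest one `p`-adically, so in every solution two of the `2k` variables have the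
same `p`-adic valuation. Hölder's inequality, available after transferring to a finite group by a
Freiman isomorphism, then bounds the energy of `A` by that of the level sets of the `p`-adic
valuation, at the cost of a factor `2 * C(2k, 2)`. Each such step lowers the dimension of the set
of valuation vectors of `A`, and a set of dimension `0` has at most two elements, `a` and `-a`.

Freiman's lemma bounds the dimension by roughly `K`, Plünnecke's inequality bounds the number of
products `a₁ ⋯ a_k` by `K ^ k * |A|`, and the Cauchy–Schwarz inequality turns the energy bound
into the lower bound for `|(A + u)^{(k)}|`. If `|A| ≤ (2 * C(2k, 2)) ^ K`, the claim is trivial;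
otherwise `|A|` is so large that Freiman's lemma even gives dimension at most `K - 1 / 2`, and
this saving absorbs the absolute constants.
-/

section ImageDim

variable {K V α β : Type*} [Field K] [AddCommGroup V] [Module K V]

variable (K) in
/-- The dimension of the affine subspace spanned by `φ(A)`. -/
noncomputable def imageDim (φ : α → V) (A : Finset α) : ℕ :=
  Module.finrank K (vectorSpan K (φ '' (A : Set α)))

lemma imageDim_le_imageDim_of_image_subset {φ : α → V} {ψ : β → V} {A : Finset α} {B : Finset β}
    (h : φ '' (A : Set α) ⊆ ψ '' (B : Set β)) : imageDim K φ A ≤ imageDim K ψ B :=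
  have := finiteDimensional_vectorSpan_of_finite K (B.finite_toSet.image ψ)
  Submodule.finrank_mono (vectorSpan_mono K h)

lemma imageDim_lt_imageDim_of_subset {φ : α → V} {A B : Finset α} (hAB : A ⊆ B)
    (f : Module.Dual K V) (hA : ∀ x ∈ A, ∀ y ∈ A, f (φ x) = f (φ y))
    (hB : ∃ x ∈ B, ∃ y ∈ B, f (φ x) ≠ f (φ y)) : imageDim K φ A < imageDim K φ B := by
  have := finiteDimensional_vectorSpan_of_finite K (B.finite_toSet.image φ)
  have hle : vectorSpan K (φ '' (A : Set α)) ≤ vectorSpan K (φ '' (B : Set α)) :=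
    vectorSpan_mono K (Set.image_mono (coe_subset.2 hAB))
  have hker : vectorSpan K (φ '' (A : Set α)) ≤ LinearMap.ker f := by
    rw [vectorSpan, Submodule.span_le]
    rintro _ ⟨_, ⟨x, hx, rfl⟩, _, ⟨y, hy, rfl⟩, rfl⟩
    simp [hA x hx y hy]
  obtain ⟨x, hx, y, hy, hxy⟩ := hB
  refine Submodule.finrank_lt_finrank_of_lt (hle.lt_of_not_ge fun hge => hxy ?_)
  have hmem : φ x -ᵥ φ y ∈ LinearMap.ker f :=
    hker (hge (vsub_mem_vectorSpan K (Set.mem_image_of_mem φ hx) (Set.mem_image_of_mem φ hy)))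
  simpa [sub_eq_zero] using hmem

end ImageDim

section FreimanLemma

variable {K V : Type*} [Field K] [LinearOrder K] [IsStrictOrderedRing K] [AddCommGroup V]
  [Module K V]

/-- The elements `b` of `B` for which adjoining `v` to `B` makes `v + b` a new element of the
sumset, that is, not a sum of two elements of `B`. -/
def newSummands [DecidableEq V] (v : V) (B : Finset V) : Finset V := {b ∈ B | v + b ∉ B + B}

lemma sub_mem_span_newSummands [DecidableEq V] {ℓ : Module.Dual K V} {v : V}
    {B : Finset V} (hℓ : ∀ b ∈ B, ℓ v < ℓ b) {b : V} (hb : b ∈ B) :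
    b - v ∈ Submodule.span K ((newSummands v B).image (· - v) : Set V) := by
  classical
  set W := Submodule.span K ((newSummands v B).image (· - v) : Set V)
  by_contra hbW
  -- A counterexample `c` minimising `ℓ` satisfies `v + c = y + z` with `ℓ y, ℓ z < ℓ c`.
  obtain ⟨c, hc, hmin⟩ := exists_min_image {b ∈ B | b - v ∉ W} ℓ ⟨b, mem_filter.2 ⟨hb, hbW⟩⟩
  obtain ⟨hcB, hcW⟩ := mem_filter.1 hc
  have hc_new : c ∉ newSummands v B := fun h =>
    hcW (Submodule.subset_span (mem_coe.2 (mem_image_of_mem _ h)))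
  obtain ⟨y, hy, z, hz, hyz⟩ : ∃ y ∈ B, ∃ z ∈ B, y + z = v + c := by
    simpa [newSummands, hcB, mem_add] using hc_new
  have hℓyz : ℓ y + ℓ z = ℓ v + ℓ c := by rw [← map_add, hyz, map_add]
  have mem_of_lt {x : V} (hx : x ∈ B) (hxc : ℓ x < ℓ c) : x - v ∈ W := by
    by_contra hxW
    exact (hmin x (mem_filter.2 ⟨hx, hxW⟩)).not_gt hxc
  have hyW := mem_of_lt hy (by linarith [hℓ z hz])
  have hzW := mem_of_lt hz (by linarith [hℓ y hy])
  have hc_eq : c - v = (y - v) + (z - v) := by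
    rw [eq_sub_of_add_eq' hyz.symm]; abel
  exact hcW (hc_eq ▸ add_mem hyW hzW)

lemma finrank_vectorSpan_insert_le_card_newSummands [DecidableEq V] {ℓ : Module.Dual K V} {v : V}
    {B : Finset V} (hℓ : ∀ b ∈ B, ℓ v < ℓ b) :
    Module.finrank K (vectorSpan K (insert v (B : Set V))) ≤ #(newSummands v B) := by
  have hle : vectorSpan K (insert v (B : Set V)) ≤
      Submodule.span K ((newSummands v B).image (· - v) : Set V) := by
    rw [vectorSpan_eq_span_vsub_set_right K (Set.mem_insert v _), Submodule.span_le]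
    rintro _ ⟨x, rfl | hx, rfl⟩
    · simp
    · exact sub_mem_span_newSummands hℓ hx
  calc Module.finrank K (vectorSpan K (insert v (B : Set V)))
      ≤ Module.finrank K (Submodule.span K ((newSummands v B).image (· - v) : Set V)) :=
        Submodule.finrank_mono hle
    _ ≤ #((newSummands v B).image (· - v)) := finrank_span_finset_le_card _
    _ ≤ #(newSummands v B) := card_image_le

variable {G : Type*} [CommGroup G] [DecidableEq G] {φ : G → V}

lemma card_mul_of_const_of_injOn (hφ : ∀ x y, φ (x * y) = φ x + φ y) {F R : Finset G} {v : V}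
    (hF : ∀ x ∈ F, φ x = v) (hR : Set.InjOn φ R) : #(F * R) = #F * #R := by
  rw [card_mul_iff]
  rintro ⟨f, x⟩ ⟨hf, hx⟩ ⟨g, y⟩ ⟨hg, hy⟩ (h : f * x = g * y)
  have hxy : x = y := hR hx hy <| by
    simpa [hφ, hF f hf, hF g hg] using congrArg φ h
  rw [hxy, mul_left_inj] at h
  rw [h, hxy]

lemma card_mul_self_add_card_mul_newSummands_le [DecidableEq V]
    (hφ : ∀ x y, φ (x * y) = φ x + φ y) {ℓ : Module.Dual K V} {F B : Finset G} {v : V}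
    (hFne : F.Nonempty) (hF : ∀ x ∈ F, φ x = v) (hB : ∀ b ∈ B, ℓ v < ℓ (φ b)) :
    #(B * B) + #F * (#(newSummands v (B.image φ)) + 1) ≤ #((F ∪ B) * (F ∪ B)) := by
  obtain ⟨a, ha⟩ := hFne
  obtain ⟨R, hRB, hRinj, hRimg⟩ := exists_subset_injOn_image_eq_of_surjOn (B : Set G)
    (newSummands v (B.image φ)) (f := φ) fun w hw => by
      simpa using (mem_filter.1 (mem_coe.1 hw)).1
  have hφR {x : G} (hx : x ∈ R) : v + φ x ∉ B.image φ + B.image φ := by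
    have h : φ x ∈ newSummands v (B.image φ) := hRimg ▸ mem_image_of_mem φ hx
    exact (mem_filter.1 h).2
  have ha_notMem : φ a ∉ φ '' R := by
    rintro ⟨x, hx, hxa⟩
    exact (hB x (hRB hx)).ne (by rw [hxa, hF a ha])
  have haR : a ∉ R := fun h => ha_notMem ⟨a, h, rfl⟩
  have hcard : #(F * insert a R) = #F * (#(newSummands v (B.image φ)) + 1) := by
    rw [card_mul_of_const_of_injOn hφ hF (by
      rw [coe_insert, Set.injOn_insert haR]; exact ⟨hRinj, ha_notMem⟩),
      card_insert_of_notMem haR, ← hRimg, card_image_of_injOn hRinj]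
  have hdisj : Disjoint (B * B) (F * insert a R) := by
    simp only [disjoint_left, mem_mul, not_exists, not_and]
    rintro _ ⟨y, hy, z, hz, rfl⟩ f hf x hx h
    have hφ_eq : v + φ x = φ y + φ z := by rw [← hF f hf, ← hφ, ← hφ, h]
    rcases mem_insert.1 hx with rfl | hxR
    · have := congrArg ℓ hφ_eq
      rw [map_add, map_add, hF x ha] at this
      linarith [hB y hy, hB z hz]
    · exact hφR hxR (hφ_eq ▸ add_mem_add (mem_image_of_mem φ hy) (mem_image_of_mem φ hz))
  rw [← hcard, ← card_union_of_disjoint hdisj]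
  exact card_le_card <| union_subset
    (mul_subset_mul subset_union_right subset_union_right)
    (mul_subset_mul subset_union_left <| insert_subset (mem_union_left _ ha) <|
      (coe_subset.1 hRB).trans subset_union_right)

lemma card_mul_self_add_card_le_of_notMem_affineSpan (hφ : ∀ x y, φ (x * y) = φ x + φ y)
    {ℓ : Module.Dual K V} {F B : Finset G} {v : V} (hFne : F.Nonempty) (hF : ∀ x ∈ F, φ x = v)
    (hB : ∀ b ∈ B, ℓ v < ℓ (φ b)) (hv : v ∉ affineSpan K (φ '' (B : Set G))) :
    #(B * B) + #(F ∪ B) ≤ #((F ∪ B) * (F ∪ B)) := by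
  obtain ⟨a, ha⟩ := hFne
  have hdisj : Disjoint (B * B) (a • (F ∪ B)) := by
    simp only [disjoint_left, mem_mul, mem_smul_finset, not_exists, not_and]
    rintro _ ⟨y, hy, z, hz, rfl⟩ x hx h
    have hφ_eq : v + φ x = φ y + φ z := by rw [← hF a ha, ← hφ, ← hφ, ← h, smul_eq_mul]
    rcases mem_union.1 hx with hxF | hxB
    · have := congrArg ℓ hφ_eq
      rw [map_add, map_add, hF x hxF] at this
      linarith [hB y hy, hB z hz]
    · have hmem {b : G} (hb : b ∈ B) : φ b ∈ affineSpan K (φ '' (B : Set G)) :=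
        subset_affineSpan K _ (Set.mem_image_of_mem φ hb)
      have hv_eq : v = (1 : K) • (φ y -ᵥ φ x) +ᵥ φ z := by
        rw [one_smul, vsub_eq_sub, vadd_eq_add, eq_sub_of_add_eq hφ_eq]; abel
      exact hv (hv_eq ▸ AffineSubspace.smul_vsub_vadd_mem _ 1 (hmem hy) (hmem hxB) (hmem hz))
  rw [← card_smul_finset a (F ∪ B), ← card_union_of_disjoint hdisj]
  exact card_le_card <| union_subset
    (mul_subset_mul subset_union_right subset_union_right)
    (smul_finset_subset_mul (mem_union_left _ ha))

lemma card_le_card_mul_self_add_of_fiber_union (hφ : ∀ x y, φ (x * y) = φ x + φ y)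
    {ℓ : Module.Dual K V} {F B : Finset G} {v : V} {m : ℕ} (hFne : F.Nonempty)
    (hF : ∀ x ∈ F, φ x = v) (hFm : #F ≤ m) (hB : ∀ b ∈ B, ℓ v < ℓ (φ b))
    (ih : ∀ e ≤ imageDim K φ B, (e + 1) * #B ≤ #(B * B) + m * (e + 1).choose 2)
    {e : ℕ} (he : e ≤ imageDim K φ (F ∪ B)) :
    (e + 1) * #(F ∪ B) ≤ #((F ∪ B) * (F ∪ B)) + m * (e + 1).choose 2 := by
  classical
  have himage : φ '' (F ∪ B : Finset G) = insert v (φ '' (B : Set G)) := by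
    have hFv : φ '' (F : Set G) = {v} := by
      rw [Set.image_congr hF, Set.Nonempty.image_const (coe_nonempty.2 hFne)]
    rw [coe_union, Set.image_union, hFv, Set.singleton_union]
  have hcard := card_union_le F B
  rw [imageDim, himage] at he
  by_cases hv : v ∈ affineSpan K (φ '' (B : Set G))
  · have heB : e ≤ imageDim K φ B := by
      rwa [← direction_affineSpan, affineSpan_insert_eq_affineSpan K hv, direction_affineSpan] at he
    have hnew : e ≤ #(newSummands v (B.image φ)) := by
      rw [← coe_image] at he
      exact he.trans (finrank_vectorSpan_insert_le_card_newSummands (ℓ := ℓ) (by simpa using hB))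
    have hgain := card_mul_self_add_card_mul_newSummands_le hφ hFne hF hB
    have := Nat.mul_le_mul_left #F (Nat.succ_le_succ hnew)
    have := Nat.mul_le_mul_left (e + 1) hcard
    linarith [ih e heB]
  · have hgain := card_mul_self_add_card_le_of_notMem_affineSpan hφ hFne hF hB hv
    rcases e with _ | e
    · simp only [zero_add, one_mul]; omega
    have heB : e ≤ imageDim K φ B :=
      Nat.succ_le_succ_iff.1 (he.trans (finrank_vectorSpan_insert_le_set K _ v))
    have hchoose : (e + 1 + 1).choose 2 = (e + 1) + (e + 1).choose 2 := by
      rw [Nat.choose_succ_succ' (e + 1) 1, Nat.choose_one_right]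
    rw [hchoose]
    have := ih e heB
    have := Nat.mul_le_mul_left (e + 1) hFm
    have := Nat.mul_le_mul_left (e + 1) hcard
    linarith

lemma exists_dual_injOn (B : Finset V) : ∃ ℓ : Module.Dual K V, Set.InjOn ℓ B := by
  classical
  obtain ⟨ℓ, hℓ⟩ := Module.exists_dual_forall_apply_ne_zero (K := K)
    (fun p : {p : B × B // (p.1 : V) ≠ p.2} => (p.1.1 : V) - p.1.2) fun p => sub_ne_zero.2 p.2
  refine ⟨ℓ, fun x hx y hy hxy => ?_⟩
  by_contra hne
  exact hℓ ⟨(⟨x, hx⟩, ⟨y, hy⟩), hne⟩ (by simp [hxy])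

theorem card_le_card_mul_self_add_of_le_imageDim [DecidableEq V]
    (hφ : ∀ x y, φ (x * y) = φ x + φ y) {m : ℕ} {A : Finset G}
    (hm : ∀ v, #{x ∈ A | φ x = v} ≤ m) {e : ℕ} (he : e ≤ imageDim K φ A) :
    (e + 1) * #A ≤ #(A * A) + m * (e + 1).choose 2 := by
  obtain ⟨ℓ, hℓ⟩ := exists_dual_injOn (K := K) (A.image φ)
  rw [coe_image] at hℓ
  induction A using Finset.strongInduction generalizing e with
  | H A ih =>
  rcases A.eq_empty_or_nonempty with rfl | hA
  · simp
  obtain ⟨a, ha, hmin⟩ := A.exists_min_image (fun x => ℓ (φ x)) hA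
  set F := {x ∈ A | φ x = φ a}
  set B := {x ∈ A | φ x ≠ φ a}
  have hFB : F ∪ B = A := filter_union_filter_not_eq _ A
  have haF : a ∈ F := mem_filter.2 ⟨ha, rfl⟩
  have hBA : B ⊂ A := filter_ssubset.2 ⟨a, ha, by simp⟩
  have hBlt : ∀ b ∈ B, ℓ (φ a) < ℓ (φ b) := fun b hb =>
    have hb := mem_filter.1 hb
    (hmin b hb.1).lt_of_ne fun h => hb.2 <|
      hℓ (Set.mem_image_of_mem φ hb.1) (Set.mem_image_of_mem φ ha) h.symm
  rw [← hFB] at he ⊢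
  refine card_le_card_mul_self_add_of_fiber_union hφ ⟨a, haF⟩ (fun x hx => (mem_filter.1 hx).2)
    (hm (φ a)) hBlt (fun e he => ih B hBA (fun v => ?_) he ?_) he
  · exact (card_le_card (filter_subset_filter _ hBA.subset)).trans (hm v)
  · exact hℓ.mono (Set.image_mono (coe_subset.2 hBA.subset))

end FreimanLemma

section FiniteModel

lemma isAddTorsion_addCircle_one_rat : IsAddTorsion (AddCircle (1 : ℚ)) := by
  intro x
  obtain ⟨q, rfl⟩ := QuotientAddGroup.mk_surjective x
  rw [isOfFinAddOrder_iff_nsmul_eq_zero]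
  refine ⟨q.den, q.den_pos, ?_⟩
  change ((q.den • q : ℚ) : AddCircle (1 : ℚ)) = 0
  exact (AddCircle.coe_eq_zero_iff _).2 ⟨q.num, by simp⟩

universe u

variable {G : Type u} [CommGroup G]

lemma exists_monoidHom_isMulTorsion_injOn (T : Finset G) :
    ∃ (C : Type u) (_ : CommGroup C) (Φ : G →* C), IsMulTorsion C ∧ Set.InjOn Φ T := by
  have hsep (d : Additive G) : ∃ c : Additive G →+ AddCircle (1 : ℚ), d ≠ 0 → c d ≠ 0 := by
    by_cases hd : d = 0
    · exact ⟨0, absurd hd⟩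
    · obtain ⟨c, hc⟩ := CharacterModule.exists_character_apply_ne_zero_of_ne_zero hd
      exact ⟨c, fun _ => hc⟩
  choose c hc using hsep
  let Φ : Additive G →+ (T × T → AddCircle (1 : ℚ)) :=
    AddMonoidHom.pi fun p => c (.ofMul (p.1 / p.2))
  refine ⟨Multiplicative (T × T → AddCircle (1 : ℚ)), inferInstance,
    AddMonoidHom.toMultiplicativeRight Φ, ?_, fun x hx y hy hxy => ?_⟩
  · exact fun x => isOfFinAddOrder_ofMul_iff.1 <|
      IsOfFinAddOrder.pi fun p => isAddTorsion_addCircle_one_rat (x.toAdd p)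
  · by_contra hne
    refine hc (.ofMul (x / y)) (by simpa [sub_eq_zero] using hne) ?_
    have hΦ : Φ (.ofMul x) = Φ (.ofMul y) := hxy
    have hΦ' : Φ (.ofMul (x / y)) = 0 := by rw [ofMul_div, map_sub, hΦ, sub_self]
    exact congrFun hΦ' (⟨x, hx⟩, ⟨y, hy⟩)

theorem exists_finite_isMulFreimanIso (n : ℕ) (A : Finset G) :
    ∃ (H : Type u) (_ : CommGroup H) (_ : Finite H) (g : G → H),
      IsMulFreimanIso n A (g '' A) g := by
  classical
  obtain ⟨C, _, Φ, htor, hinj⟩ := exists_monoidHom_isMulTorsion_injOn (A ∪ A ^ n)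
  let H := Subgroup.closure (Φ '' A)
  have : Finite (Φ '' A) := A.finite_toSet.image Φ
  have hH : Finite H :=
    CommGroup.finite_of_fg_isMulTorsion H (htor.subgroup H)
  let g (a : G) : H := if ha : Φ a ∈ H then ⟨Φ a, ha⟩ else 1
  have hg {a : G} (ha : a ∈ A) : (g a : C) = Φ a := by
    have hΦa : Φ a ∈ H := Subgroup.subset_closure (Set.mem_image_of_mem Φ (mem_coe.2 ha))
    simp only [g, hΦa, dif_pos]
  have hg_prod {s : Multiset G} (hs : ∀ ⦃x⦄, x ∈ s → x ∈ (A : Set G)) :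
      ((s.map g).prod : C) = Φ s.prod := by
    rw [← Subgroup.coe_subtype, map_multiset_prod, map_multiset_prod, Multiset.map_map]
    exact congrArg _ (Multiset.map_congr rfl fun a ha => hg (hs ha))
  have hpow {s : Multiset G} (hs : ∀ ⦃x⦄, x ∈ s → x ∈ (A : Set G)) (hn : s.card = n) :
      s.prod ∈ A ∪ A ^ n := by
    have h := Set.multiset_prod_mem_multiset_prod s (fun _ => (A : Set G)) id hs
    rw [Multiset.map_id, Multiset.map_const', Multiset.prod_replicate, hn, ← coe_pow] at h
    exact mem_union_right _ h
  refine ⟨H, inferInstance, hH, g, Set.InjOn.bijOn_image fun x hx y hy hxy => ?_,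
    fun s t hs ht hsn htn => ?_⟩
  · exact hinj (by simp [mem_coe.1 hx]) (by simp [mem_coe.1 hy]) <| by rw [← hg hx, ← hg hy, hxy]
  · rw [← Subtype.coe_inj, hg_prod hs, hg_prod ht]
    exact hinj.eq_iff (mem_coe.2 (hpow hs hsn)) (mem_coe.2 (hpow ht htn))

end FiniteModel

section Energy

-- Hölder's inequality for `#ι` functions; `c` is the total mass that normalises the sums.
lemma sum_prod_le_mul_prod_of_sum_pow_le {ι τ : Type*} [Fintype ι] [Nonempty ι] {T : Finset τ}
    {a : ι → τ → ℝ} {N : ι → ℝ} {c : ℝ} (ha : ∀ i, ∀ t ∈ T, 0 ≤ a i t) (hN : ∀ i, 0 ≤ N i)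
    (h : ∀ i, ∑ t ∈ T, a i t ^ Fintype.card ι ≤ c * N i ^ Fintype.card ι) :
    ∑ t ∈ T, ∏ i, a i t ≤ c * ∏ i, N i := by
  set n := Fintype.card ι
  have hn : n ≠ 0 := Fintype.card_ne_zero
  by_cases hpos : ∀ i, 0 < N i
  · have amgm (t : τ) (ht : t ∈ T) : ∏ i, a i t / N i ≤ (n : ℝ)⁻¹ * ∑ i, (a i t / N i) ^ n := by
      have hdiv (i : ι) : 0 ≤ a i t / N i := div_nonneg (ha i t ht) (hN i)
      have h := Real.geom_mean_le_arith_mean_weighted univ (fun _ => (n : ℝ)⁻¹)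
        (fun i => (a i t / N i) ^ n) (fun _ _ => by positivity) (by simp [n])
        fun i _ => pow_nonneg (hdiv i) n
      rw [mul_sum]
      simpa only [Real.pow_rpow_inv_natCast (hdiv _) hn] using h
    have hsum (i : ι) : ∑ t ∈ T, (a i t / N i) ^ n ≤ c := by
      simp only [div_pow, ← sum_div]
      exact (div_le_iff₀ (pow_pos (hpos i) n)).2 (h i)
    have hquot : (∑ t ∈ T, ∏ i, a i t) / ∏ i, N i ≤ c := by
      calc (∑ t ∈ T, ∏ i, a i t) / ∏ i, N i
          = ∑ t ∈ T, ∏ i, a i t / N i := by simp only [sum_div, prod_div_distrib]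
        _ ≤ ∑ t ∈ T, (n : ℝ)⁻¹ * ∑ i, (a i t / N i) ^ n := sum_le_sum amgm
        _ = (n : ℝ)⁻¹ * ∑ i, ∑ t ∈ T, (a i t / N i) ^ n := by rw [← mul_sum, sum_comm]
        _ ≤ (n : ℝ)⁻¹ * ∑ _i : ι, c := by gcongr with i; exact hsum i
        _ = c := by simp [n]
    exact (div_le_iff₀ (prod_pos fun i _ => hpos i)).1 hquot
  · obtain ⟨j, hj⟩ : ∃ j, N j = 0 := by
      push Not at hpos
      exact hpos.imp fun i hi => le_antisymm hi (hN i)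
    have hsum_eq : ∑ t ∈ T, a j t ^ n = 0 :=
      le_antisymm (by simpa [hj, hn] using h j) (sum_nonneg fun t ht => pow_nonneg (ha j t ht) n)
    have hzero (t : τ) (ht : t ∈ T) : ∏ i, a i t = 0 := prod_eq_zero (mem_univ j) <|
      pow_eq_zero_iff hn |>.1 <|
        (sum_eq_zero_iff_of_nonneg fun t ht => pow_nonneg (ha j t ht) n).1 hsum_eq t ht
    rw [sum_eq_zero hzero, prod_eq_zero (mem_univ j) hj, mul_zero]

lemma addChar_sum {ι A M : Type*} [AddCommMonoid A] [CommMonoid M] (ψ : AddChar A M)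
    (s : Finset ι) (x : ι → A) : ψ (∑ i ∈ s, x i) = ∏ i ∈ s, ψ (x i) :=
  map_prod ψ.toMonoidHom (fun i => Multiplicative.ofAdd (x i)) s

lemma card_sq_le_card_mul_card_filter_product {α β : Type*} [DecidableEq β] {s : Finset α}
    {t : Finset β} {f : α → β} (hf : ∀ a ∈ s, f a ∈ t) :
    #s ^ 2 ≤ #t * #{p ∈ s ×ˢ s | f p.1 = f p.2} := by
  have hpairs : #{p ∈ s ×ˢ s | f p.1 = f p.2} = ∑ b ∈ t, #{a ∈ s | f a = b} ^ 2 := by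
    rw [card_eq_sum_card_fiberwise (f := fun p => f p.1) (t := t) fun p hp => hf p.1 <|
      (mem_product.1 (mem_filter.1 (mem_coe.1 hp)).1).1]
    refine sum_congr rfl fun b _ => ?_
    rw [sq, ← card_product, filter_filter, ← filter_product]
    congr 1
    grind
  rw [hpairs, card_eq_sum_card_fiberwise hf]
  exact sq_sum_le_card_mul_sum_sq

variable {G : Type*} [CommGroup G] [DecidableEq G] {k : ℕ}

/-- The solutions of `z₁ ⋯ z_k = z_{k+1} ⋯ z_{2k}` with each variable `z i` in its own set
`X i`. -/
def mulSolutions (X : Fin k ⊕ Fin k → Finset G) : Finset (Fin k ⊕ Fin k → G) :=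
  {z ∈ Fintype.piFinset X | ∏ i, z (.inl i) = ∏ i, z (.inr i)}

lemma mem_mulSolutions {X : Fin k ⊕ Fin k → Finset G} {z : Fin k ⊕ Fin k → G} :
    z ∈ mulSolutions X ↔ (∀ i, z i ∈ X i) ∧ ∏ i, z (.inl i) = ∏ i, z (.inr i) := by
  rw [mulSolutions, mem_filter, Fintype.mem_piFinset]

/-- The `2k`-fold multiplicative energy of `X`; `k = 2` is `Finset.mulEnergy X X`. -/
def multiEnergy (k : ℕ) (X : Finset G) : ℕ := #(mulSolutions fun _ : Fin k ⊕ Fin k => X)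

/-- The `2k`-th root of the energy: on a finite group this is, up to normalisation, the
`L^{2k}`-norm of the Fourier transform of the indicator function of `X`. -/
noncomputable def energyNorm (k : ℕ) (X : Finset G) : ℝ :=
  (multiEnergy k X : ℝ) ^ ((2 * k : ℕ) : ℝ)⁻¹

lemma energyNorm_nonneg (X : Finset G) : 0 ≤ energyNorm k X := by
  unfold energyNorm; positivity

lemma energyNorm_pow (hk : k ≠ 0) (X : Finset G) : energyNorm k X ^ (2 * k) = multiEnergy k X :=
  Real.rpow_inv_natCast_pow (Nat.cast_nonneg _) (by positivity)

lemma energyNorm_le_iff (hk : k ≠ 0) {X : Finset G} {b : ℝ} (hb : 0 ≤ b) :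
    energyNorm k X ≤ b ↔ multiEnergy k X ≤ b ^ (2 * k) := by
  rw [← energyNorm_pow hk, pow_le_pow_iff_left₀ (energyNorm_nonneg X) hb (by positivity)]

lemma energyNorm_le_card (hk : k ≠ 0) (X : Finset G) : energyNorm k X ≤ #X := by
  rw [energyNorm_le_iff hk (Nat.cast_nonneg _)]
  have h : multiEnergy k X ≤ #X ^ (2 * k) := by
    refine (card_filter_le _ _).trans_eq ?_
    simp [two_mul]
  exact_mod_cast h

section Fourier

/-- The Fourier coefficient at `ψ` of the indicator function of `X`, with conjugation omitted. -/
noncomputable def charSum (X : Finset G) (ψ : AddChar (Additive G) ℂ) : ℂ :=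
  ∑ x ∈ X, ψ (.ofMul x)

variable [Finite G]

lemma card_mul_card_mulSolutions (X : Fin k ⊕ Fin k → Finset G) :
    (Nat.card G * #(mulSolutions X) : ℂ) = ∑ ψ : AddChar (Additive G) ℂ,
      (∏ i, charSum (X (.inl i)) ψ) * ∏ i, starRingEnd ℂ (charSum (X (.inr i)) ψ) := by
  have := Fintype.ofFinite G
  have hexpand (ψ : AddChar (Additive G) ℂ) :
      (∏ i, charSum (X (.inl i)) ψ) * ∏ i, starRingEnd ℂ (charSum (X (.inr i)) ψ) =
        ∑ z ∈ Fintype.piFinset X, ψ (.ofMul ((∏ i, z (.inl i)) / ∏ i, z (.inr i))) := by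
    let ε : Fin k ⊕ Fin k → G → ℂ :=
      Sum.elim (fun _ x => ψ (.ofMul x)) fun _ x => starRingEnd ℂ (ψ (.ofMul x))
    calc _ = ∏ i, ∑ x ∈ X i, ε i x := by simp [Fintype.prod_sum_type, ε, charSum]
      _ = ∑ z ∈ Fintype.piFinset X, ∏ i, ε i (z i) := prod_univ_sum X ε
      _ = _ := sum_congr rfl fun z _ => by
        simp [Fintype.prod_sum_type, ε, div_eq_mul_inv, AddChar.map_add_eq_mul,
          AddChar.map_neg_eq_conj, addChar_sum]
  simp only [hexpand]
  rw [sum_comm]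
  simp only [AddChar.sum_apply_eq_ite, ofMul_eq_zero, div_eq_one]
  rw [← sum_filter, sum_const, nsmul_eq_mul, mul_comm, Nat.card_eq_fintype_card,
    Fintype.card_additive, mulSolutions]

lemma card_mul_multiEnergy (X : Finset G) :
    (Nat.card G * multiEnergy k X : ℝ) =
      ∑ ψ : AddChar (Additive G) ℂ, ‖charSum X ψ‖ ^ (2 * k) := by
  have h := card_mul_card_mulSolutions fun _ : Fin k ⊕ Fin k => X
  simp only [prod_const, card_univ, Fintype.card_fin, ← mul_pow, Complex.mul_conj'] at h
  simp only [pow_mul]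
  exact_mod_cast h

lemma card_mul_card_mulSolutions_le (X : Fin k ⊕ Fin k → Finset G) :
    (Nat.card G * #(mulSolutions X) : ℝ) ≤
      ∑ ψ : AddChar (Additive G) ℂ, ∏ i, ‖charSum (X i) ψ‖ := by
  have h := congrArg norm (card_mul_card_mulSolutions X)
  rw [norm_mul, Complex.norm_natCast, Complex.norm_natCast] at h
  rw [h]
  refine (norm_sum_le _ _).trans_eq (sum_congr rfl fun ψ _ => ?_)
  simp only [norm_mul, norm_prod, RCLike.norm_conj, Fintype.prod_sum_type]

lemma card_mulSolutions_le_prod_energyNorm_of_finite (hk : k ≠ 0)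
    (X : Fin k ⊕ Fin k → Finset G) : (#(mulSolutions X) : ℝ) ≤ ∏ i, energyNorm k (X i) := by
  have : Nonempty (Fin k ⊕ Fin k) := ⟨.inl ⟨0, Nat.pos_of_ne_zero hk⟩⟩
  have hcard : Fintype.card (Fin k ⊕ Fin k) = 2 * k := by simp [two_mul]
  have hG : (0 : ℝ) < Nat.card G := Nat.cast_pos.2 Nat.card_pos
  refine le_of_mul_le_mul_left ((card_mul_card_mulSolutions_le X).trans ?_) hG
  refine sum_prod_le_mul_prod_of_sum_pow_le (fun _ _ _ => norm_nonneg _)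
    (fun i => energyNorm_nonneg _) fun i => ?_
  rw [hcard, energyNorm_pow hk, card_mul_multiEnergy]

end Fourier

lemma card_mulSolutions_image_of_isMulFreimanIso {H : Type*} [CommGroup H] [DecidableEq H]
    {A : Set G} {B : Set H} {g : G → H} (hg : IsMulFreimanIso k A B g)
    {X : Fin k ⊕ Fin k → Finset G} (hX : ∀ i, ↑(X i) ⊆ A) :
    #(mulSolutions fun i => (X i).image g) = #(mulSolutions X) := by
  have hprod {x y : Fin k → G} (hx : ∀ i, x i ∈ A) (hy : ∀ i, y i ∈ A) :
      ∏ i, g (x i) = ∏ i, g (y i) ↔ ∏ i, x i = ∏ i, y i := by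
    have h := hg.map_prod_eq_map_prod (s := univ.val.map x) (t := univ.val.map y)
      (by simpa using hx) (by simpa using hy) (by simp) (by simp)
    rwa [Multiset.map_map, Multiset.map_map] at h
  symm
  refine card_bij (fun z _ i => g (z i)) (fun z hz => ?_) (fun z hz w hw hzw => ?_) fun w hw => ?_
  · obtain ⟨hzX, hz⟩ := mem_mulSolutions.1 hz
    refine mem_mulSolutions.2 ⟨fun i => mem_image_of_mem g (hzX i), ?_⟩
    exact (hprod (fun i => hX _ (hzX _)) fun i => hX _ (hzX _)).2 hz
  · have hzX := (mem_mulSolutions.1 hz).1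
    have hwX := (mem_mulSolutions.1 hw).1
    exact funext fun i => hg.bijOn.injOn (hX i (hzX i)) (hX i (hwX i)) (congrFun hzw i)
  · obtain ⟨hwX, hw⟩ := mem_mulSolutions.1 hw
    choose z hzX hzw using fun i => mem_image.1 (hwX i)
    obtain rfl : w = fun i => g (z i) := funext fun i => (hzw i).symm
    exact ⟨z, mem_mulSolutions.2 ⟨hzX, (hprod (fun i => hX _ (hzX _)) fun i => hX _ (hzX _)).1 hw⟩,
      rfl⟩

theorem card_mulSolutions_le_prod_energyNorm (hk : k ≠ 0) (X : Fin k ⊕ Fin k → Finset G) :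
    (#(mulSolutions X) : ℝ) ≤ ∏ i, energyNorm k (X i) := by
  classical
  obtain ⟨H, _, _, g, hg⟩ := exists_finite_isMulFreimanIso k (univ.biUnion X)
  have hX (i) : (X i : Set G) ⊆ univ.biUnion X :=
    coe_subset.2 (subset_biUnion_of_mem X (mem_univ i))
  have hnorm (i) : energyNorm k ((X i).image g) = energyNorm k (X i) := by
    simp only [energyNorm, multiEnergy,
      card_mulSolutions_image_of_isMulFreimanIso hg fun _ : Fin k ⊕ Fin k => hX i]
  rw [← card_mulSolutions_image_of_isMulFreimanIso hg hX]
  simpa only [hnorm] using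
    card_mulSolutions_le_prod_energyNorm_of_finite hk fun i => (X i).image g

lemma card_mulSolutions_ite_le (hk : k ≠ 0) (P : Finset (Fin k ⊕ Fin k)) (X Y : Finset G) :
    (#(mulSolutions fun i => if i ∈ P then X else Y) : ℝ) ≤
      energyNorm k X ^ #P * energyNorm k Y ^ (2 * k - #P) := by
  have hcompl : #Pᶜ = 2 * k - #P := by simp [card_compl, two_mul]
  refine (card_mulSolutions_le_prod_energyNorm hk _).trans_eq ?_
  simp only [apply_ite (energyNorm k), prod_ite, prod_const, ← hcompl]
  simp [filter_not, compl_eq_univ_sdiff]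

lemma energyNorm_union_le (hk : k ≠ 0) (X Y : Finset G) :
    energyNorm k (X ∪ Y) ≤ energyNorm k X + energyNorm k Y := by
  rw [energyNorm_le_iff hk (add_nonneg (energyNorm_nonneg X) (energyNorm_nonneg Y))]
  have hcover : mulSolutions (fun _ : Fin k ⊕ Fin k => X ∪ Y) ⊆
      univ.biUnion fun P : Finset (Fin k ⊕ Fin k) =>
        mulSolutions fun i => if i ∈ P then X else Y := by
    intro z hz
    obtain ⟨hzX, hz⟩ := mem_mulSolutions.1 hz
    refine mem_biUnion.2 ⟨univ.filter (z · ∈ X), mem_univ _, mem_mulSolutions.2 ⟨fun i => ?_, hz⟩⟩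
    by_cases hi : z i ∈ X
    · simp [hi]
    · simpa [hi] using hzX i
  calc (multiEnergy k (X ∪ Y) : ℝ)
      ≤ ∑ P : Finset (Fin k ⊕ Fin k),
          (#(mulSolutions fun i => if i ∈ P then X else Y) : ℝ) := by
        exact_mod_cast (card_le_card hcover).trans card_biUnion_le
    _ ≤ ∑ P : Finset (Fin k ⊕ Fin k), energyNorm k X ^ #P * energyNorm k Y ^ (2 * k - #P) :=
        sum_le_sum fun P _ => card_mulSolutions_ite_le hk P X Y
    _ = (energyNorm k X + energyNorm k Y) ^ (2 * k) := by
        simpa [two_mul] using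
          Fintype.sum_pow_mul_eq_add_pow (Fin k ⊕ Fin k) (energyNorm k X) (energyNorm k Y)

section Labels

variable {β : Type*} [DecidableEq β] {X : Finset G} {l : G → β}

lemma multiEnergy_le_sum_of_forall_exists_label_eq
    (h : ∀ z ∈ mulSolutions fun _ : Fin k ⊕ Fin k => X, ∃ s t, s ≠ t ∧ l (z s) = l (z t)) :
    multiEnergy k X ≤ ∑ P ∈ (univ : Finset (Fin k ⊕ Fin k)).powersetCard 2, ∑ b ∈ X.image l,
      #(mulSolutions fun i => if i ∈ P then {x ∈ X | l x = b} else X) := by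
  have hcover : mulSolutions (fun _ : Fin k ⊕ Fin k => X) ⊆ (univ.powersetCard 2).biUnion fun P =>
      (X.image l).biUnion fun b =>
        mulSolutions fun i => if i ∈ P then {x ∈ X | l x = b} else X := by
    intro z hz
    obtain ⟨s, t, hst, hl⟩ := h z hz
    obtain ⟨hzX, hz⟩ := mem_mulSolutions.1 hz
    refine mem_biUnion.2 ⟨{s, t}, mem_powersetCard.2 ⟨subset_univ _, card_pair hst⟩,
      mem_biUnion.2 ⟨l (z s), mem_image_of_mem l (hzX s),
        mem_mulSolutions.2 ⟨fun i => ?_, hz⟩⟩⟩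
    by_cases hi : i ∈ ({s, t} : Finset (Fin k ⊕ Fin k))
    · rcases mem_insert.1 hi with rfl | hit
      · simp [hzX]
      · obtain rfl := mem_singleton.1 hit
        simp [hzX, hl]
    · simpa only [hi, if_false] using hzX i
  exact (card_le_card hcover).trans
    (card_biUnion_le.trans (sum_le_sum fun P _ => card_biUnion_le))

lemma energyNorm_sq_le_of_forall_exists_label_eq (hk : k ≠ 0)
    (h : ∀ z ∈ mulSolutions fun _ : Fin k ⊕ Fin k => X, ∃ s t, s ≠ t ∧ l (z s) = l (z t)) :
    energyNorm k X ^ 2 ≤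
      (2 * k).choose 2 * ∑ b ∈ X.image l, energyNorm k {x ∈ X | l x = b} ^ 2 := by
  set pairs := (univ : Finset (Fin k ⊕ Fin k)).powersetCard 2
  set S := ∑ b ∈ X.image l, energyNorm k {x ∈ X | l x = b} ^ 2
  have hpairs : #pairs = (2 * k).choose 2 := by simp [pairs, two_mul]
  have hpow : energyNorm k X ^ 2 * energyNorm k X ^ (2 * k - 2) ≤
      (2 * k).choose 2 * S * energyNorm k X ^ (2 * k - 2) := by
    calc energyNorm k X ^ 2 * energyNorm k X ^ (2 * k - 2)
        = multiEnergy k X := by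
          rw [← pow_add, Nat.add_sub_cancel' (by omega), energyNorm_pow hk]
      _ ≤ ∑ P ∈ pairs, ∑ b ∈ X.image l,
            (#(mulSolutions fun i => if i ∈ P then {x ∈ X | l x = b} else X) : ℝ) := by
          exact_mod_cast multiEnergy_le_sum_of_forall_exists_label_eq h
      _ ≤ ∑ P ∈ pairs, ∑ b ∈ X.image l,
            energyNorm k {x ∈ X | l x = b} ^ 2 * energyNorm k X ^ (2 * k - 2) := by
          refine sum_le_sum fun P hP => sum_le_sum fun b _ => ?_
          simpa only [(mem_powersetCard.1 hP).2] using card_mulSolutions_ite_le hk P _ X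
      _ = (2 * k).choose 2 * S * energyNorm k X ^ (2 * k - 2) := by
          rw [sum_const, ← sum_mul, nsmul_eq_mul, hpairs, mul_assoc]
  rcases (energyNorm_nonneg X).eq_or_lt with h0 | hpos
  · rw [← h0, zero_pow two_ne_zero]
    exact mul_nonneg (Nat.cast_nonneg _) (sum_nonneg fun b _ => sq_nonneg _)
  · exact le_of_mul_le_mul_right hpow (pow_pos hpos _)

lemma energyNorm_sq_le_mul_card_of_forall_exists_label_eq (hk : k ≠ 0)
    (h : ∀ z ∈ mulSolutions fun _ : Fin k ⊕ Fin k => X, ∃ s t, s ≠ t ∧ l (z s) = l (z t))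
    {D : ℝ} (hD : ∀ b, energyNorm k {x ∈ X | l x = b} ^ 2 ≤ D * #{x ∈ X | l x = b}) :
    energyNorm k X ^ 2 ≤ (2 * k).choose 2 * (D * #X) := by
  refine (energyNorm_sq_le_of_forall_exists_label_eq hk h).trans ?_
  rw [card_eq_sum_card_image l X, Nat.cast_sum, mul_sum _ _ D]
  exact mul_le_mul_of_nonneg_left (sum_le_sum fun b _ => hD b) (Nat.cast_nonneg _)

end Labels

lemma card_pow_le_card_pow_mul_multiEnergy (k : ℕ) (X : Finset G) :
    #X ^ (2 * k) ≤ #(X ^ k) * multiEnergy k X := by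
  set T := Fintype.piFinset fun _ : Fin k => X
  have hmaps (x : Fin k → G) (hx : x ∈ T) : ∏ i, x i ∈ X ^ k := by
    rw [← mem_coe, coe_pow, Set.mem_pow_iff_prod]
    exact ⟨x, Fintype.mem_piFinset.1 hx, rfl⟩
  have henergy : multiEnergy k X = #{p ∈ T ×ˢ T | ∏ i, p.1 i = ∏ i, p.2 i} :=
    card_equiv (Equiv.sumArrowEquivProdArrow (Fin k) (Fin k) G) fun z => by
      simp [mem_mulSolutions, T, Sum.forall]
  have h := card_sq_le_card_mul_card_filter_product hmaps
  rwa [Fintype.card_piFinset_const, ← pow_mul, mul_comm k 2, ← henergy] at h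

end Energy

section ValuationCollisions

variable {Γ₀ ι κ : Type*} [LinearOrderedCommGroupWithZero Γ₀]

section Ring

variable {R : Type*} [CommRing R] (v : Valuation R Γ₀)

lemma valuation_prod_one_add_sub_one_lt {s : Finset ι} {b : ι → R} {c : Γ₀} (hc0 : 0 < c)
    (hc1 : c ≤ 1) (hb : ∀ i ∈ s, v (b i) < c) : v (∏ i ∈ s, (1 + b i) - 1) < c := by
  classical
  induction s using Finset.induction_on with
  | empty => simpa using hc0
  | insert a s ha ih =>
    have hs := ih fun i hi => hb i (mem_insert_of_mem hi)
    have hba := hb a (mem_insert_self a s)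
    have hmul : v (b a * (∏ i ∈ s, (1 + b i) - 1)) < c := by
      rw [map_mul]
      exact (mul_lt_mul'' hba hs zero_le zero_le).trans_le (mul_le_of_le_one_left' hc1)
    have hexpand : ∏ i ∈ insert a s, (1 + b i) - 1 =
        (∏ i ∈ s, (1 + b i) - 1 + b a) + b a * (∏ i ∈ s, (1 + b i) - 1) := by
      rw [prod_insert ha]; ring
    rw [hexpand]
    exact v.map_add_lt (v.map_add_lt hs hba) hmul

lemma prod_one_add_ne_of_forall_valuation_lt {s : Finset ι} {t : Finset κ} {b : ι → R}
    {b' : κ → R} {i₀ : ι} (hi₀ : i₀ ∈ s) (h0 : v (b i₀) ≠ 0) (h1 : v (b i₀) ≤ 1)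
    (hs : ∀ i ∈ s, i ≠ i₀ → v (b i) < v (b i₀)) (ht : ∀ j ∈ t, v (b' j) < v (b i₀)) :
    ∏ i ∈ s, (1 + b i) ≠ ∏ j ∈ t, (1 + b' j) := by
  classical
  intro heq
  have hpos := zero_lt_iff.2 h0
  rw [← mul_prod_erase s _ hi₀] at heq
  set P := ∏ i ∈ s.erase i₀, (1 + b i)
  set Q := ∏ j ∈ t, (1 + b' j)
  have hP : v (P - 1) < v (b i₀) := valuation_prod_one_add_sub_one_lt v hpos h1 fun i hi =>
    hs i (mem_of_mem_erase hi) (ne_of_mem_erase hi)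
  have hQ : v (Q - 1) < v (b i₀) := valuation_prod_one_add_sub_one_lt v hpos h1 ht
  have hmul : v (b i₀ * (P - 1)) < v (b i₀) := by
    rw [map_mul]
    exact mul_lt_of_lt_one_right hpos (hP.trans_le h1)
  have hb : b i₀ = (Q - 1) - (P - 1) - b i₀ * (P - 1) := by rw [← heq]; ring
  exact (v.map_sub_lt (v.map_sub_lt hQ hP) hmul).ne (congrArg v hb.symm)

variable [Fintype ι] [Fintype κ]

lemma exists_ne_valuation_eq_of_prod_one_add_eq [Nonempty (ι ⊕ κ)] {b : ι ⊕ κ → R}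
    (h0 : ∀ i, v (b i) ≠ 0) (h1 : ∀ i, v (b i) ≤ 1)
    (h : ∏ i, (1 + b (.inl i)) = ∏ j, (1 + b (.inr j))) :
    ∃ s t, s ≠ t ∧ v (b s) = v (b t) := by
  by_contra! hne
  obtain ⟨s, -, hs⟩ := univ.exists_max_image (fun i => v (b i)) univ_nonempty
  have hlt (t) (hts : t ≠ s) : v (b t) < v (b s) := (hs t (mem_univ t)).lt_of_ne (hne t s hts)
  rcases s with i₀ | j₀
  · exact prod_one_add_ne_of_forall_valuation_lt v (b := fun i => b (.inl i)) (mem_univ i₀)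
      (h0 _) (h1 _) (fun i _ hi => hlt _ (by simpa using hi)) (fun j _ => hlt _ (by simp)) h
  · exact prod_one_add_ne_of_forall_valuation_lt v (b := fun j => b (.inr j)) (mem_univ j₀)
      (h0 _) (h1 _) (fun j _ hj => hlt _ (by simpa using hj)) (fun i _ => hlt _ (by simp)) h.symm

end Ring

variable {F : Type*} [Field F] (v : Valuation F Γ₀) {k : ℕ} {z : Fin k ⊕ Fin k → F} {u : F}

lemma exists_ne_valuation_eq_of_forall_le (hk : k ≠ 0) (hu : u ≠ 0) (hz : ∀ i, z i ≠ 0)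
    (hle : ∀ i, v (z i) ≤ v u) (h : ∏ i, (z (.inl i) + u) = ∏ i, (z (.inr i) + u)) :
    ∃ s t, s ≠ t ∧ v (z s) = v (z t) := by
  have : NeZero k := ⟨hk⟩
  have hvu : v u ≠ 0 := v.ne_zero_iff.2 hu
  have hfactor (x : F) : 1 + x / u = (x + u) / u := by field_simp; ring
  obtain ⟨s, t, hst, heq⟩ := exists_ne_valuation_eq_of_prod_one_add_eq v
    (b := fun i => z i / u) (fun i => v.ne_zero_iff.2 (div_ne_zero (hz i) hu))
    (fun i => by rw [map_div₀]; exact div_le_one_of_le₀ (hle i) zero_le)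
    (by simp only [hfactor, prod_div_distrib, h, prod_const])
  rw [map_div₀, map_div₀, div_left_inj' hvu] at heq
  exact ⟨s, t, hst, heq⟩

lemma exists_ne_valuation_eq_of_forall_ge (hk : k ≠ 0) (hu : u ≠ 0) (hz : ∀ i, z i ≠ 0)
    (hge : ∀ i, v u ≤ v (z i)) (h : ∏ i, z (.inl i) = ∏ i, z (.inr i))
    (hadd : ∏ i, (z (.inl i) + u) = ∏ i, (z (.inr i) + u)) :
    ∃ s t, s ≠ t ∧ v (z s) = v (z t) := by
  have : NeZero k := ⟨hk⟩
  have hvu : v u ≠ 0 := v.ne_zero_iff.2 hu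
  have hfactor (i) : 1 + u / z i = (z i + u) / z i := by have := hz i; field_simp
  obtain ⟨s, t, hst, heq⟩ := exists_ne_valuation_eq_of_prod_one_add_eq v
    (b := fun i => u / z i) (fun i => v.ne_zero_iff.2 (div_ne_zero hu (hz i)))
    (fun i => by rw [map_div₀]; exact div_le_one_of_le₀ (hge i) zero_le)
    (by simp only [hfactor, prod_div_distrib, h, hadd])
  rw [map_div₀, map_div₀, div_eq_mul_inv, div_eq_mul_inv, mul_right_inj' hvu, inv_inj] at heq
  exact ⟨s, t, hst, heq⟩

end ValuationCollisions

section ShiftedPairs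

variable {F Γ₀ : Type*} [Field F] [DecidableEq F] [LinearOrderedCommGroupWithZero Γ₀]
  (v : Valuation F Γ₀) {k : ℕ} {u : F} {X : Finset (Fˣ × Fˣ)}

lemma exists_ne_valuation_fst_eq_of_mem_mulSolutions (hk : k ≠ 0) (hu : u ≠ 0)
    (hX : ∀ x ∈ X, (x.2 : F) = x.1 + u)
    (hv : (∀ x ∈ X, v x.1 ≤ v u) ∨ ∀ x ∈ X, v u ≤ v x.1) {z : Fin k ⊕ Fin k → Fˣ × Fˣ}
    (hz : z ∈ mulSolutions fun _ => X) : ∃ s t, s ≠ t ∧ v (z s).1 = v (z t).1 := by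
  obtain ⟨hzX, hprod⟩ := mem_mulSolutions.1 hz
  obtain ⟨hfst, hsnd⟩ := Prod.ext_iff.1 hprod
  rw [Prod.fst_prod, Prod.fst_prod, ← Units.val_inj, Units.coe_prod, Units.coe_prod] at hfst
  rw [Prod.snd_prod, Prod.snd_prod, ← Units.val_inj, Units.coe_prod, Units.coe_prod] at hsnd
  simp only [hX _ (hzX _)] at hsnd
  rcases hv with hle | hge
  · exact exists_ne_valuation_eq_of_forall_le v hk hu (fun i => (z i).1.ne_zero)
      (fun i => hle _ (hzX i)) hsnd
  · exact exists_ne_valuation_eq_of_forall_ge v hk hu (fun i => (z i).1.ne_zero)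
      (fun i => hge _ (hzX i)) hfst hsnd

lemma energyNorm_sq_le_mul_card_of_valuation_fiber_le (hk : k ≠ 0) (hu : u ≠ 0)
    (hX : ∀ x ∈ X, (x.2 : F) = x.1 + u) {D : ℝ}
    (hD : ∀ c, ∀ Y ⊆ {x ∈ X | v x.1 = c}, energyNorm k Y ^ 2 ≤ D * #Y) :
    energyNorm k X ^ 2 ≤ 2 * (2 * k).choose 2 * (D * #X) := by
  set X₁ := {x ∈ X | v x.1 ≤ v u}
  set X₂ := {x ∈ X | ¬ v x.1 ≤ v u}
  have hpart {Y : Finset (Fˣ × Fˣ)} (hYX : Y ⊆ X)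
      (hv : (∀ x ∈ Y, v x.1 ≤ v u) ∨ ∀ x ∈ Y, v u ≤ v x.1) :
      energyNorm k Y ^ 2 ≤ (2 * k).choose 2 * (D * #Y) :=
    energyNorm_sq_le_mul_card_of_forall_exists_label_eq (l := fun x => v x.1) hk
      (fun z => exists_ne_valuation_fst_eq_of_mem_mulSolutions v hk hu
        (fun x hx => hX x (hYX hx)) hv)
      fun c => hD c _ (filter_subset_filter _ hYX)
  have h₁ := hpart (Y := X₁) (filter_subset _ X) (.inl fun x hx => (mem_filter.1 hx).2)
  have h₂ := hpart (Y := X₂) (filter_subset _ X)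
    (.inr fun x hx => (not_le.1 (mem_filter.1 hx).2).le)
  have hcard : (#X₁ + #X₂ : ℝ) = #X := by exact_mod_cast card_filter_add_card_filter_not _
  calc energyNorm k X ^ 2
      = energyNorm k (X₁ ∪ X₂) ^ 2 := by rw [filter_union_filter_not_eq]
    _ ≤ (energyNorm k X₁ + energyNorm k X₂) ^ 2 := by
        gcongr
        · exact energyNorm_nonneg _
        · exact energyNorm_union_le hk X₁ X₂
    _ ≤ 2 * (energyNorm k X₁ ^ 2 + energyNorm k X₂ ^ 2) := add_sq_le
    _ ≤ 2 * ((2 * k).choose 2 * (D * #X₁) + (2 * k).choose 2 * (D * #X₂)) := by gcongr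
    _ = 2 * (2 * k).choose 2 * (D * #X) := by rw [← hcard]; ring

end ShiftedPairs

section RationalValuations

/-- The vector of all `p`-adic valuations of `x`, with entries in `ℚ` so that linear algebra
applies. -/
def valuationVector (x : ℚˣ) : Nat.Primes → ℚ := fun p => padicValRat p x

lemma valuationVector_mul (x y : ℚˣ) :
    valuationVector (x * y) = valuationVector x + valuationVector y := by
  funext p
  have : Fact (p : ℕ).Prime := ⟨p.2⟩
  simp [valuationVector, padicValRat.mul x.ne_zero y.ne_zero]

lemma abs_eq_one_of_valuationVector_eq_zero {x : ℚˣ} (h : valuationVector x = 0) :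
    |(x : ℚ)| = 1 := by
  set q := (x : ℚ)
  have hnum : q.num.natAbs = q.den := by
    rw [Nat.eq_iff_prime_padicValNat_eq _ _ (by simp [q]) q.den_nz]
    intro p hp
    have hval : padicValRat p q = 0 := by
      exact_mod_cast (show ((padicValRat p q : ℤ) : ℚ) = 0 from congrFun h ⟨p, hp⟩)
    rw [padicValRat_def, padicValInt] at hval
    omega
  rw [← Rat.num_div_den q, abs_div, ← Int.cast_abs, Int.abs_eq_natAbs, hnum]
  simp

lemma eq_or_eq_neg_of_valuationVector_eq {x y : ℚˣ} (h : valuationVector x = valuationVector y) :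
    x = y ∨ x = -y := by
  have hxy : valuationVector (x / y) = 0 := by
    rw [← add_eq_right (b := valuationVector y), ← valuationVector_mul, div_mul_cancel, h]
  have habs := abs_eq_one_of_valuationVector_eq_zero hxy
  rw [Units.val_div_eq_div_val, abs_div, div_eq_one_iff_eq (by simp), abs_eq_abs] at habs
  simpa [Units.ext_iff] using habs

lemma card_le_two_of_valuationVector_eq {A : Finset ℚˣ}
    (h : ∀ x ∈ A, ∀ y ∈ A, valuationVector x = valuationVector y) : #A ≤ 2 := by
  rcases A.eq_empty_or_nonempty with rfl | ⟨a, ha⟩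
  · simp
  refine (card_le_card (t := {a, -a}) fun x hx => ?_).trans card_le_two
  simpa using eq_or_eq_neg_of_valuationVector_eq (h x hx a ha)

lemma valuationVector_apply_eq_of_padicValuation_eq {p : Nat.Primes} [Fact (p : ℕ).Prime]
    {x y : ℚˣ} (h : Rat.padicValuation p x = Rat.padicValuation p y) :
    valuationVector x p = valuationVector y p := by
  simpa [Rat.padicValuation, valuationVector] using h

variable {k : ℕ} {u : ℚ} {X : Finset (ℚˣ × ℚˣ)}

lemma card_le_two_of_valuationVector_fst_eq (hX : ∀ x ∈ X, (x.2 : ℚ) = x.1 + u)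
    (h : ∀ x ∈ X, ∀ y ∈ X, valuationVector x.1 = valuationVector y.1) : #X ≤ 2 := by
  have hinj : Set.InjOn Prod.fst (X : Set (ℚˣ × ℚˣ)) := fun x hx y hy hxy =>
    Prod.ext hxy (Units.ext (by rw [hX x hx, hX y hy, hxy]))
  rw [← card_image_of_injOn hinj]
  exact card_le_two_of_valuationVector_eq (by simpa using h)

lemma one_le_two_mul_choose_two (hk : k ≠ 0) : (1 : ℝ) ≤ 2 * (2 * k).choose 2 := by
  have : 0 < (2 * k).choose 2 := Nat.choose_pos (by omega)
  exact_mod_cast (by omega : 1 ≤ 2 * (2 * k).choose 2)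

theorem energyNorm_sq_le_pow_imageDim_mul_card (hk : k ≠ 0) (hu : u ≠ 0)
    (hX : ∀ x ∈ X, (x.2 : ℚ) = x.1 + u) :
    energyNorm k X ^ 2 ≤
      (2 * (2 * k).choose 2) ^ imageDim ℚ (fun x => valuationVector x.1) X * 2 * #X := by
  have hQ := one_le_two_mul_choose_two hk
  induction X using Finset.strongInduction with
  | H X ih =>
  by_cases hconst : ∀ x ∈ X, ∀ y ∈ X, valuationVector x.1 = valuationVector y.1
  · have hcard : (#X : ℝ) ≤ 2 := by exact_mod_cast card_le_two_of_valuationVector_fst_eq hX hconst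
    calc energyNorm k X ^ 2 ≤ #X ^ 2 :=
          pow_le_pow_left₀ (energyNorm_nonneg X) (energyNorm_le_card hk X) 2
      _ ≤ 1 * 2 * #X := by rw [sq, one_mul]; gcongr
      _ ≤ _ := by gcongr; exact one_le_pow₀ hQ
  push Not at hconst
  obtain ⟨x, hx, y, hy, hxy⟩ := hconst
  obtain ⟨p, hp⟩ := Function.ne_iff.1 hxy
  have : Fact (p : ℕ).Prime := ⟨p.2⟩
  set φ := fun x : ℚˣ × ℚˣ => valuationVector x.1
  have hdim {c} {Y : Finset (ℚˣ × ℚˣ)} (hY : Y ⊆ {x ∈ X | Rat.padicValuation p x.1 = c}) :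
      imageDim ℚ φ Y < imageDim ℚ φ X := by
    refine imageDim_lt_imageDim_of_subset (hY.trans (filter_subset _ X)) (LinearMap.proj p)
      (fun a ha b hb => valuationVector_apply_eq_of_padicValuation_eq ?_) ⟨x, hx, y, hy, hp⟩
    exact (mem_filter.1 (hY ha)).2.trans (mem_filter.1 (hY hb)).2.symm
  refine (energyNorm_sq_le_mul_card_of_valuation_fiber_le (Rat.padicValuation p) hk hu hX
    (D := (2 * (2 * k).choose 2) ^ (imageDim ℚ φ X - 1) * 2) fun c Y hY => ?_).trans_eq ?_
  · have hYX : Y ⊂ X := (hY.trans (filter_subset _ X)).ssubset_of_ne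
      fun h => (hdim hY).ne (by rw [h])
    refine (ih Y hYX fun x hx => hX x (hYX.subset hx)).trans ?_
    gcongr
    exact Nat.le_sub_one_of_lt (hdim hY)
  · have hpos : 0 < imageDim ℚ φ X := (Nat.zero_le _).trans_lt (hdim (c := 0) (empty_subset _))
    rw [← mul_assoc, ← mul_assoc, ← pow_succ', Nat.sub_one_add_one hpos.ne']

end RationalValuations

section SmallDoubling

lemma natCast_add_half_le_of_forall_mul_le {d : ℕ} {K N : ℝ} (hK : 1 ≤ K)
    (hN : (1 + 2 * K) ^ 2 ≤ N) (h : ∀ e : ℕ, e ≤ d → (e + 1) * N ≤ K * N + e * (e + 1)) :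
    d + 1 / 2 ≤ K := by
  have hdK : (d : ℝ) ≤ K := by
    by_contra! hlt
    have hK0 : 0 ≤ K := by linarith
    have hfloor := h (⌊K⌋₊ + 1) ((Nat.floor_lt hK0).2 hlt)
    have hlt_floor := Nat.lt_floor_add_one K
    have hfloor_le := Nat.floor_le hK0
    push_cast at hfloor
    nlinarith
  have hd : d * (d + 1) ≤ N / 2 := by nlinarith
  have hN0 : 0 < N := by nlinarith
  refine le_of_mul_le_mul_right ?_ hN0
  linarith [h d le_rfl]

lemma imageDim_valuationVector_add_half_le {U : Finset ℚˣ} {K : ℝ} (hK1 : 1 ≤ K)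
    (hK : #(U * U) ≤ K * #U) (hU : (1 + 2 * K) ^ 2 ≤ #U) :
    imageDim ℚ valuationVector U + 1 / 2 ≤ K := by
  classical
  have hfiber (w : Nat.Primes → ℚ) : #{x ∈ U | valuationVector x = w} ≤ 2 :=
    card_le_two_of_valuationVector_eq fun x hx y hy =>
      (mem_filter.1 hx).2.trans (mem_filter.1 hy).2.symm
  refine natCast_add_half_le_of_forall_mul_le hK1 hU fun e he => ?_
  have hfreiman := card_le_card_mul_self_add_of_le_imageDim valuationVector_mul hfiber he
  rw [mul_comm 2, Nat.choose_two_right, Nat.div_mul_cancel (Nat.even_mul_pred_self _).two_dvd,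
    Nat.add_sub_cancel] at hfreiman
  have hfreiman : ((e + 1) * #U : ℝ) ≤ #(U * U) + (e + 1) * e := by exact_mod_cast hfreiman
  linarith

lemma card_pow_le_pow_mul_card {G : Type*} [CommGroup G] [DecidableEq G] {U : Finset G} {K : ℝ}
    (hU : U.Nonempty) (hK : #(U * U) ≤ K * #U) (k : ℕ) : (#(U ^ k) : ℝ) ≤ K ^ k * #U := by
  have hpos : (0 : ℝ) < #U := by exact_mod_cast hU.card_pos
  have hpl : (#(U ^ k) : ℝ) ≤ (#(U * U) / #U) ^ k * #U := by
    have h := (NNRat.cast_le (K := ℝ)).2 (pluennecke_ruzsa_inequality_pow_mul hU U k)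
    push_cast at h
    exact h
  refine hpl.trans ?_
  gcongr
  exact (div_le_iff₀ hpos).2 hK

end SmallDoubling

section ShiftProdSet

-- The second coordinates must be units, so `x = -u` is left out; this is the `+ 1`.
lemma exists_finset_shifted_pairs {F : Type*} [Field F] (U : Finset Fˣ) (u : F) :
    ∃ X : Finset (Fˣ × Fˣ),
      (∀ x ∈ X, x.1 ∈ U) ∧ (∀ x ∈ X, (x.2 : F) = x.1 + u) ∧ #U ≤ #X + 1 := by
  classical
  let shift (x : Fˣ) : Fˣ := if h : (x : F) + u ≠ 0 then Units.mk0 (x + u) h else 1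
  refine ⟨(U.filter fun x : Fˣ => (x : F) + u ≠ 0).image fun x => (x, shift x), ?_, ?_, ?_⟩
  · exact forall_mem_image.2 fun x hx => (mem_filter.1 hx).1
  · exact forall_mem_image.2 fun x hx => by simp [shift, (mem_filter.1 hx).2]
  · have hroot : #(U.filter fun x : Fˣ => ¬ (x : F) + u ≠ 0) ≤ 1 := card_le_one.2 fun x hx y hy =>
      Units.ext <| add_right_cancel (b := u) <| by
        rw [not_not.1 (mem_filter.1 hx).2, not_not.1 (mem_filter.1 hy).2]
    rw [card_image_of_injective _ fun x y h => congrArg Prod.fst h,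
      ← card_filter_add_card_filter_not fun x : Fˣ => (x : F) + u ≠ 0]
    gcongr

variable {k : ℕ} {u : ℚ} {U : Finset ℚˣ} {X : Finset (ℚˣ × ℚˣ)}

lemma card_pow_le_card_pow_mul_card_shiftProdSet (hXU : ∀ x ∈ X, x.1 ∈ U)
    (hX : ∀ x ∈ X, (x.2 : ℚ) = x.1 + u) :
    #(X ^ k) ≤ #(U ^ k) * #(shiftProdSet k (U.image Units.val) u) := by
  rw [← card_product]
  refine card_le_card_of_injOn (Prod.map id Units.val) (fun x hx => ?_)
    (Function.injective_id.prodMap Units.val_injective).injOn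
  rw [coe_pow, Set.mem_pow_iff_prod] at hx
  obtain ⟨f, hf, rfl⟩ := hx
  refine mem_coe.2 (mem_product.2 ⟨?_, ?_⟩)
  · rw [← mem_coe, coe_pow, Set.mem_pow_iff_prod]
    exact ⟨fun i => (f i).1, fun i => hXU _ (hf i), (Prod.fst_prod).symm⟩
  · refine mem_image.2 ⟨fun i => (f i).1, ?_, ?_⟩
    · exact Fintype.mem_piFinset.2 fun i => mem_image_of_mem _ (hXU _ (hf i))
    · simp only [Prod.map_snd, Prod.snd_prod, Units.coe_prod, hX _ (hf _)]

theorem card_pow_le_card_pow_mul_card_shiftProdSet_mul (hk : k ≠ 0) (hu : u ≠ 0)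
    (hXU : ∀ x ∈ X, x.1 ∈ U) (hX : ∀ x ∈ X, (x.2 : ℚ) = x.1 + u) :
    (#X : ℝ) ^ k ≤ #(U ^ k) * #(shiftProdSet k (U.image Units.val) u) *
      (2 * (2 * (2 * k).choose 2) ^ imageDim ℚ valuationVector U) ^ k := by
  set B : ℝ := 2 * (2 * (2 * k).choose 2) ^ imageDim ℚ valuationVector U
  set S := #(shiftProdSet k (U.image Units.val) u)
  have hQ := one_le_two_mul_choose_two hk
  have hdim : imageDim ℚ (fun x => valuationVector x.1) X ≤ imageDim ℚ valuationVector U :=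
    imageDim_le_imageDim_of_image_subset (by grind)
  have hnorm : energyNorm k X ^ 2 ≤ B * #X := by
    refine (energyNorm_sq_le_pow_imageDim_mul_card hk hu hX).trans ?_
    rw [mul_comm _ (2 : ℝ)]
    unfold B
    gcongr
  have hcs : (#X : ℝ) ^ k * #X ^ k ≤ #(U ^ k) * S * B ^ k * #X ^ k := by
    calc (#X : ℝ) ^ k * #X ^ k = #X ^ (2 * k) := by rw [← pow_add, two_mul]
      _ ≤ #(X ^ k) * multiEnergy k X := by
          exact_mod_cast card_pow_le_card_pow_mul_multiEnergy k X
      _ ≤ #(U ^ k) * S * (energyNorm k X ^ 2) ^ k := by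
          rw [← energyNorm_pow hk, pow_mul]
          gcongr
          exact_mod_cast card_pow_le_card_pow_mul_card_shiftProdSet hXU hX
      _ ≤ #(U ^ k) * S * (B * #X) ^ k := by gcongr
      _ = #(U ^ k) * S * B ^ k * #X ^ k := by rw [mul_pow]; ring
  rcases X.eq_empty_or_nonempty with rfl | hXne
  · simp only [card_empty, Nat.cast_zero, zero_pow hk]
    positivity
  · exact le_of_mul_le_mul_right hcs (pow_pos (by exact_mod_cast hXne.card_pos) k)

end ShiftProdSet

section Parameters

variable {k : ℕ} {K N Q S : ℝ}

lemma twelve_le_two_mul_choose_two (hk : 2 ≤ k) : (12 : ℝ) ≤ 2 * (2 * k).choose 2 := by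
  have h : Nat.choose 4 2 ≤ (2 * k).choose 2 := Nat.choose_le_choose 2 (by omega)
  exact_mod_cast Nat.mul_le_mul_left 2 h

lemma one_add_two_mul_sq_le_rpow (hQ : 9 ≤ Q) (hK : 1 ≤ K) : (1 + 2 * K) ^ 2 ≤ Q ^ K := by
  have hbernoulli : 1 + K * 2 ≤ (1 + 2 : ℝ) ^ K :=
    one_add_mul_self_le_rpow_one_add (by norm_num) hK
  calc (1 + 2 * K) ^ 2 ≤ ((1 + 2 : ℝ) ^ K) ^ 2 := by gcongr; linarith
    _ = (9 : ℝ) ^ K := by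
        rw [Real.rpow_pow_comm (by norm_num)]
        norm_num
    _ ≤ Q ^ K := by gcongr

lemma pow_pred_le_pow_mul_rpow (hK : 1 ≤ K) (hQ : 1 ≤ Q) (hN0 : 0 ≤ N) (hN : N ≤ Q ^ K) :
    N ^ (k - 1) ≤ K ^ k * Q ^ (K * k) := by
  have hQK : 1 ≤ Q ^ K := Real.one_le_rpow hQ (by linarith)
  rw [Real.rpow_mul (by linarith), Real.rpow_natCast]
  calc N ^ (k - 1) ≤ (Q ^ K) ^ (k - 1) := by gcongr
    _ ≤ (Q ^ K) ^ k := pow_le_pow_right₀ hQK (Nat.sub_le k 1)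
    _ ≤ K ^ k * (Q ^ K) ^ k := le_mul_of_one_le_left (by positivity) (one_le_pow₀ hK)

lemma pow_pred_le_of_sub_one_pow_le {d : ℕ} (hk : k ≠ 0) (hQ : 9 ≤ Q) (hdK : d + 1 / 2 ≤ K)
    (hN : 3 ≤ N) (hS : 0 ≤ S) (h : (N - 1) ^ k ≤ K ^ k * N * S * (2 * Q ^ d) ^ k) :
    N ^ (k - 1) ≤ K ^ k * Q ^ (K * k) * S := by
  have hQd : 3 * Q ^ d ≤ Q ^ K := by
    have hsqrt : 3 ≤ √Q := Real.le_sqrt_of_sq_le (by linarith)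
    calc 3 * Q ^ d ≤ √Q * Q ^ d := by gcongr
      _ = Q ^ (d + 1 / 2 : ℝ) := by
          rw [Real.rpow_add (by linarith), Real.rpow_natCast, ← Real.sqrt_eq_rpow, mul_comm]
      _ ≤ Q ^ K := Real.rpow_le_rpow_of_exponent_le (by linarith) hdK
  have hN0 : 0 < N := by linarith
  have hK0 : 0 ≤ K := by linarith [Nat.cast_nonneg (α := ℝ) d]
  rw [Real.rpow_mul (by linarith), Real.rpow_natCast]
  refine le_of_mul_le_mul_right ?_ hN0
  calc N ^ (k - 1) * N = (3 / 2 * (2 / 3 * N)) ^ k := by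
        rw [← pow_succ, Nat.sub_one_add_one hk]; ring
    _ ≤ (3 / 2 * (N - 1)) ^ k := by gcongr; linarith
    _ = (3 / 2) ^ k * (N - 1) ^ k := mul_pow _ _ _
    _ ≤ (3 / 2) ^ k * (K ^ k * N * S * (2 * Q ^ d) ^ k) := by gcongr
    _ = K ^ k * (3 * Q ^ d) ^ k * S * N := by
        rw [show 3 * Q ^ d = 3 / 2 * (2 * Q ^ d) by ring, mul_pow (3 / 2)]; ring
    _ ≤ K ^ k * (Q ^ K) ^ k * S * N := by gcongr

end Parameters

theorem card_pow_pred_le_of_rpow_le_card {U : Finset ℚˣ} {K : ℝ} (hK1 : 1 ≤ K)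
    (hK : #(U * U) ≤ K * #U) {u : ℚ} (hu : u ≠ 0) {k : ℕ} (hk : 2 ≤ k)
    (hU : (2 * (2 * k).choose 2 : ℝ) ^ K ≤ #U) :
    (#U : ℝ) ^ (k - 1) ≤ K ^ k * (2 * (2 * k).choose 2) ^ (K * k) *
      #(shiftProdSet k (U.image Units.val) u) := by
  have hQ : (9 : ℝ) ≤ 2 * (2 * k).choose 2 := by linarith [twelve_le_two_mul_choose_two hk]
  have hUK : (1 + 2 * K) ^ 2 ≤ #U := (one_add_two_mul_sq_le_rpow hQ hK1).trans hU
  have hU3 : (3 : ℝ) ≤ #U := by nlinarith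
  have hUne : U.Nonempty := card_pos.1 (by exact_mod_cast zero_lt_three.trans_le hU3)
  obtain ⟨X, hXU, hX, hcard⟩ := exists_finset_shifted_pairs U u
  have hcard : (#U : ℝ) - 1 ≤ #X := sub_le_iff_le_add.2 (by exact_mod_cast hcard)
  refine pow_pred_le_of_sub_one_pow_le (by omega) hQ
    (imageDim_valuationVector_add_half_le hK1 hK hUK) hU3 (Nat.cast_nonneg _) ?_
  calc ((#U : ℝ) - 1) ^ k ≤ #X ^ k := pow_le_pow_left₀ (by linarith) hcard k
    _ ≤ _ := card_pow_le_card_pow_mul_card_shiftProdSet_mul (by omega) hu hXU hX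
    _ ≤ _ := by gcongr; exact card_pow_le_pow_mul_card hUne hK k

/-- If `A ⊂ ℚ` is a finite set of nonzero rationals with `|AA| ≤ K|A|` and `u ≠ 0`, then
for every integer `k ≥ 2`, `|(A+u)^{(k)}| ≥ |A|^{k-1} / (K^k · (2·C(2k,2))^{Kk})`. -/
theorem shifted_product_chang_bound (A : Finset ℚ) (h0 : (0 : ℚ) ∉ A) (K : ℝ)
    (hK : ((A * A).card : ℝ) ≤ K * A.card) (u : ℚ) (hu : u ≠ 0)
    (k : ℕ) (hk : 2 ≤ k) :
    (A.card : ℝ) ^ (k - 1) /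
        (K ^ k * (2 * (Nat.choose (2 * k) 2 : ℝ)) ^ (K * k)) ≤
      ((shiftProdSet k A u).card : ℝ) := by
  rcases A.eq_empty_or_nonempty with rfl | hA
  · simp [show k - 1 ≠ 0 by omega]
  lift A to Finset ℚˣ using fun x hx => IsUnit.mk0 x fun h => h0 (h ▸ hx)
  have hmul : A.image Units.val * A.image Units.val = (A * A).image Units.val :=
    (image_mul (Units.coeHom ℚ)).symm
  rw [hmul, card_image_of_injective _ Units.val_injective,
    card_image_of_injective _ Units.val_injective] at hK
  rw [card_image_of_injective _ Units.val_injective]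
  have hApos : (0 : ℝ) < #A := by exact_mod_cast (image_nonempty.1 hA).card_pos
  have hK1 : 1 ≤ K := by
    have : (#A : ℝ) ≤ #(A * A) := by exact_mod_cast card_le_card_mul_self
    exact le_of_mul_le_mul_right (by linarith) hApos
  have hQ := one_le_two_mul_choose_two (k := k) (by omega)
  rw [div_le_iff₀' (by positivity)]
  rcases le_total (#A : ℝ) ((2 * (2 * k).choose 2 : ℝ) ^ K) with hsmall | hlarge
  · have hne : (shiftProdSet k (A.image Units.val) u).Nonempty :=
      (Fintype.piFinset_nonempty.2 fun _ => hA).image _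
    exact (pow_pred_le_pow_mul_rpow hK1 hQ hApos.le hsmall).trans
      (le_mul_of_one_le_right (by positivity) (by exact_mod_cast hne.card_pos))
  · exact card_pow_pred_le_of_rpow_le_card hK1 hK hu hk hlarge
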